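/- Let n ≥ 1 be an integer. Suppose Ṽ : {x ∈ ℝ^{n+4} : x_{n+4} ≥ 0} → ℝ is continuous, twice continuously differentiable on the open half-space ℝ^{n+4}₊, satisfies −ΔṼ(x) = x_{n+4}·|x + e_{n+4}|^{−n−2} for all x ∈ ℝ^{n+4}₊, Ṽ(x) = 0 whenever x_{n+4} = 0, and Ṽ(x) → 0 as |x| → ∞. Then Ṽ(x) ≥ (x_{n+4}² / (4n(1 + x_{n+4}))) · |x + e_{n+4}|^{−n} ≥ 0 for every x with x_{n+4} ≥ 0. -/

import Mathlib

/-!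
Put `s = x_k + 1` and `r = ‖x + e_k‖`, where `k` is the last coordinate. For every exponent
`a > n` the barrier `W_a = (4a)⁻¹ r^(-a) (s - 2 + s⁻¹)` vanishes on `{x_k = 0}` because
`s - 2 + s⁻¹ = x_k² / (1 + x_k)`, tends to zero at infinity because it is at most `r^(1-a)`, and is
a strict subsolution: with `δ = a - n`,
`4a ΔW_a = a r^(-a-2) (-4 (s - 1) + δ (s - 2 + s⁻¹)) + 2 r^(-a) s⁻³ > -4a x_k r^(-a-2)`,
and `r ≥ 1` turns `r^(-a-2)` into `r^(-n-2)`. If `W_a - V` were positive somewhere, it would have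
a positive interior maximum (`exists_isLocalMax`), where its second derivatives along the
coordinate lines are nonpositive; summing them contradicts the strict inequality
`ΔW_a > ΔV` (`barrier_strict`). Hence `W_a ≤ V`, and letting `a ↓ n` gives the claim.

The strict exponent `a > n` is what makes `n = 1` work: the barrier with `a = n = 1` does not decay
along the `k`-axis.
-/

open Set

/-- The Euclidean Laplacian `Δf = Σᵢ ∂²f/∂xᵢ²`. -/
noncomputable def laplacian {m : ℕ} (f : EuclideanSpace ℝ (Fin m) → ℝ)
    (x : EuclideanSpace ℝ (Fin m)) : ℝ :=
  ∑ i : Fin m, fderiv ℝ (fun y => fderiv ℝ f y (EuclideanSpace.single i 1)) x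
    (EuclideanSpace.single i 1)

open Filter Topology

/-- Second-order necessary condition at a local maximum on the line. -/
lemma second_deriv_nonpos {g g1 : ℝ → ℝ} {c : ℝ}
    (hg : ∀ᶠ τ in 𝓝 (0 : ℝ), HasDerivAt g (g1 τ) τ) (hg1 : HasDerivAt g1 c 0)
    (hmax : IsLocalMax g 0) : c ≤ 0 := by
  by_contra! hc
  have hd : deriv g =ᶠ[𝓝 0] g1 := hg.mono fun τ h => h.deriv
  have hdd : deriv (deriv g) 0 = c := by rw [hd.deriv_eq, hg1.deriv]
  have hmin : IsLocalMin g 0 :=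
    isLocalMin_of_deriv_deriv_pos (by rwa [hdd]) hmax.deriv_eq_zero
      hg.self_of_nhds.continuousAt
  -- A point that is both a local minimum and a local maximum makes `g` locally constant.
  have hconst : g =ᶠ[𝓝 0] fun _ => g 0 := by
    filter_upwards [hmin, hmax] with τ h1 h2 using le_antisymm h2 h1
  have h0 : deriv (deriv g) 0 = 0 := by
    rw [hconst.deriv.deriv_eq]; simp
  linarith

/-- A function on a closed half-space that is nonpositive on the boundary and has nonpositive
limit superior at infinity attains any positive supremum at an interior local maximum. -/
lemma exists_isLocalMax {m : ℕ} (k : Fin m) (U : EuclideanSpace ℝ (Fin m) → ℝ)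
    (hc : ContinuousOn U {x | 0 ≤ x k}) (hb : ∀ x : EuclideanSpace ℝ (Fin m), x k = 0 → U x ≤ 0)
    (hd : ∀ ε > (0 : ℝ), ∃ R : ℝ, ∀ x : EuclideanSpace ℝ (Fin m), 0 ≤ x k → R ≤ ‖x‖ → U x < ε)
    (x₀ : EuclideanSpace ℝ (Fin m)) (hx₀ : 0 ≤ x₀ k) (hpos : 0 < U x₀) :
    ∃ p : EuclideanSpace ℝ (Fin m), 0 < p k ∧ IsLocalMax U p := by
  obtain ⟨R, hR⟩ := hd _ hpos
  have hcl : IsClosed {x : EuclideanSpace ℝ (Fin m) | 0 ≤ x k} :=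
    isClosed_le continuous_const (by fun_prop)
  have hK : IsCompact (Metric.closedBall (0 : EuclideanSpace ℝ (Fin m)) (max R ‖x₀‖)
      ∩ {x | 0 ≤ x k}) := (isCompact_closedBall _ _).inter_right hcl
  obtain ⟨p, ⟨-, hpH⟩, hp⟩ := hK.exists_isMaxOn ⟨x₀, by simp, hx₀⟩
    (hc.mono Set.inter_subset_right)
  have h0p : U x₀ ≤ U p := isMaxOn_iff.1 hp x₀ ⟨by simp, hx₀⟩
  have hpk : 0 < p k := by
    rcases (show 0 ≤ p k from hpH).lt_or_eq with h | h
    · exact h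
    · have := hb p h.symm
      linarith
  refine ⟨p, hpk, ?_⟩
  have hop : IsOpen {x : EuclideanSpace ℝ (Fin m) | 0 < x k} :=
    isOpen_lt continuous_const (by fun_prop)
  filter_upwards [hop.mem_nhds hpk] with y hy
  have hy' : 0 ≤ y k := le_of_lt hy
  by_cases h : ‖y‖ ≤ max R ‖x₀‖
  · exact isMaxOn_iff.1 hp y ⟨by simpa using h, hy'⟩
  · push Not at h
    exact (hR y hy' ((le_max_left _ _).trans h.le)).le.trans h0p

/-- The barrier `C ‖x + e_k‖^(2α) (s - 2 + s⁻¹)` with `s = x_k + 1`. It is written through the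
squared norm, a polynomial along every line. -/
noncomputable def barrier {m : ℕ} (k : Fin m) (C α : ℝ) (x : EuclideanSpace ℝ (Fin m)) : ℝ :=
  C * ((‖x + EuclideanSpace.single k 1‖ ^ 2) ^ α * ((x k + 1) - 2 + (x k + 1)⁻¹))

/-- The barrier restricted to a coordinate line, `q`, `b`, `s` being the values of `‖y‖²`,
`y_i`, `y_k` at the base point `y = x + e_k`, and `d = δ_{ik}`. -/
noncomputable def lineB (C α q b s d τ : ℝ) : ℝ :=
  C * ((q + 2 * b * τ + τ ^ 2) ^ α * ((s + d * τ) - 2 + (s + d * τ)⁻¹))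

/-- The derivative of `lineB` in `τ`. -/
noncomputable def lineB1 (C α q b s d τ : ℝ) : ℝ :=
  C * (((2 * b + 2 * τ) * α * (q + 2 * b * τ + τ ^ 2) ^ (α - 1))
      * ((s + d * τ) - 2 + (s + d * τ)⁻¹)
    + (q + 2 * b * τ + τ ^ 2) ^ α * (d - d / (s + d * τ) ^ 2))

lemma hasDerivAt_quad (q b τ : ℝ) :
    HasDerivAt (fun τ : ℝ => q + 2 * b * τ + τ ^ 2) (2 * b + 2 * τ) τ := by
  have := (((hasDerivAt_id τ).const_mul (2 * b)).const_add q).add (hasDerivAt_pow 2 τ)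
  refine (this.congr_deriv ?_)
  simp

lemma hasDerivAt_lin (s d τ : ℝ) : HasDerivAt (fun τ : ℝ => s + d * τ) d τ := by
  simpa using ((hasDerivAt_id τ).const_mul d).const_add s

lemma hasDerivAt_lineB (C α q b s d τ : ℝ) (hQ : 0 < q + 2 * b * τ + τ ^ 2)
    (hS : 0 < s + d * τ) :
    HasDerivAt (lineB C α q b s d) (lineB1 C α q b s d τ) τ := by
  have hS1 := hasDerivAt_lin s d τ
  have h := (((hasDerivAt_quad q b τ).rpow_const (p := α) (Or.inl hQ.ne')).mul
    ((hS1.sub_const 2).add (hS1.inv hS.ne'))).const_mul C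
  refine h.congr_deriv ?_
  simp only [lineB1, Pi.add_apply, Pi.inv_apply]
  ring

lemma hasDerivAt_lineB1 (C α q b s d : ℝ) (hq : 0 < q) (hs : 0 < s) :
    HasDerivAt (lineB1 C α q b s d)
      (C * ((2 * α * q ^ (α - 1) + 4 * b ^ 2 * α * (α - 1) * q ^ (α - 2)) * (s - 2 + s⁻¹)
        + 4 * b * α * q ^ (α - 1) * (d - d / s ^ 2) + q ^ α * (2 * d ^ 2 / s ^ 3))) 0 := by
  have hQ : 0 < q + 2 * b * 0 + (0 : ℝ) ^ 2 := by simpa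
  have hS : 0 < s + d * 0 := by simpa
  have hS1 := hasDerivAt_lin s d 0
  have hQ1 := hasDerivAt_quad q b 0
  have hl : HasDerivAt (fun τ : ℝ => (2 * b + 2 * τ) * α) (2 * α) 0 := by
    simpa using (hasDerivAt_lin (2 * b) 2 0).mul_const α
  have hφ := (hS1.sub_const 2).add (hS1.inv hS.ne')
  have hψ : HasDerivAt (fun τ : ℝ => d - d / (s + d * τ) ^ 2) (2 * d ^ 2 / s ^ 3) 0 := by
    have h := ((hasDerivAt_const (0 : ℝ) d).div (hS1.pow 2) (pow_ne_zero 2 hS.ne')).const_sub d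
    refine h.congr_deriv ?_
    simp
    field_simp
  have h := (((hl.mul (hQ1.rpow_const (p := α - 1) (Or.inl hQ.ne'))).mul hφ).add
    ((hQ1.rpow_const (p := α) (Or.inl hQ.ne')).mul hψ)).const_mul C
  refine h.congr_deriv ?_
  have e : α - 1 - 1 = α - 2 := by ring
  simp [e]
  left
  ring

lemma norm_line {m : ℕ} (y : EuclideanSpace ℝ (Fin m)) (i : Fin m) (τ : ℝ) :
    ‖y + τ • EuclideanSpace.single i (1 : ℝ)‖ ^ 2 = ‖y‖ ^ 2 + 2 * y i * τ + τ ^ 2 := by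
  rw [norm_add_sq_real, inner_smul_right, norm_smul]
  simp [EuclideanSpace.inner_single_right]
  ring

lemma barrier_line {m : ℕ} (k i : Fin m) (C α : ℝ) (p : EuclideanSpace ℝ (Fin m)) (τ : ℝ) :
    barrier k C α (p + τ • EuclideanSpace.single i (1 : ℝ))
      = lineB C α (‖p + EuclideanSpace.single k 1‖ ^ 2) ((p + EuclideanSpace.single k 1 :
        EuclideanSpace ℝ (Fin m)) i) (p k + 1) (if k = i then 1 else 0) τ := by
  have h1 : p + τ • EuclideanSpace.single i (1 : ℝ) + EuclideanSpace.single k 1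
      = (p + EuclideanSpace.single k 1) + τ • EuclideanSpace.single i (1 : ℝ) := by abel
  have h2 : (p + τ • EuclideanSpace.single i (1 : ℝ)) k + 1
      = p k + 1 + (if k = i then 1 else 0) * τ := by
    simp [PiLp.single_apply]
    ring
  rw [barrier, lineB, h1, norm_line, h2]

/-- At a local maximum of `barrier - V` the Laplacian of the barrier, written out on the left, is
at most that of `V`. -/
lemma barrier_le_laplacian {m : ℕ} (k : Fin m) (C α : ℝ) (V : EuclideanSpace ℝ (Fin m) → ℝ)
    (p : EuclideanSpace ℝ (Fin m)) (hV : ContDiffAt ℝ 2 V p) (q s : ℝ)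
    (hq : q = ‖p + EuclideanSpace.single k 1‖ ^ 2) (hq0 : 0 < q) (hs : s = p k + 1) (hs0 : 0 < s)
    (hmax : IsLocalMax (fun x => barrier k C α x - V x) p) :
    C * ((2 * α * m * q ^ (α - 1) + 4 * α * (α - 1) * q ^ (α - 1)) * (s - 2 + s⁻¹)
      + 4 * α * s * q ^ (α - 1) * (1 - 1 / s ^ 2) + q ^ α * (2 / s ^ 3)) ≤ laplacian V p := by
  set y : EuclideanSpace ℝ (Fin m) := p + EuclideanSpace.single k 1 with hy
  have hline : ∀ i : Fin m,
      C * ((2 * α * q ^ (α - 1) + 4 * (y i) ^ 2 * α * (α - 1) * q ^ (α - 2)) * (s - 2 + s⁻¹)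
        + 4 * (y i) * α * q ^ (α - 1) * ((if k = i then 1 else 0) - (if k = i then 1 else 0) / s ^ 2)
        + q ^ α * (2 * (if k = i then 1 else 0) ^ 2 / s ^ 3))
      ≤ fderiv ℝ (fun y => fderiv ℝ V y (EuclideanSpace.single i 1)) p
          (EuclideanSpace.single i 1) := by
    intro i
    set d : ℝ := if k = i then 1 else 0 with hd
    set e : EuclideanSpace ℝ (Fin m) := EuclideanSpace.single i 1 with he
    have hl : ∀ τ : ℝ, HasDerivAt (fun τ : ℝ => p + τ • e) e τ := fun τ => by
      simpa using ((hasDerivAt_id τ).smul_const e).const_add p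
    have hl0 : Tendsto (fun τ : ℝ => p + τ • e) (𝓝 0) (𝓝 p) := by
      simpa using (hl 0).continuousAt.tendsto
    have hVd : ∀ᶠ τ in 𝓝 (0 : ℝ),
        HasDerivAt (fun τ : ℝ => V (p + τ • e)) (fderiv ℝ V (p + τ • e) e) τ := by
      have h1 : ∀ᶠ x in 𝓝 p, ContDiffAt ℝ 2 V x := hV.eventually (by simp)
      filter_upwards [hl0.eventually h1] with τ h
      exact (h.differentiableAt (by simp)).hasFDerivAt.comp_hasDerivAt τ (hl τ)
    have hVdd : HasDerivAt (fun τ : ℝ => fderiv ℝ V (p + τ • e) e)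
        (fderiv ℝ (fun y => fderiv ℝ V y e) p e) 0 := by
      have h1 : DifferentiableAt ℝ (fun y => fderiv ℝ V y e) p :=
        ((hV.fderiv_right (m := 1) (by norm_num)).differentiableAt (by simp)).clm_apply
          (differentiableAt_const e)
      have h2 : HasFDerivAt (fun y => fderiv ℝ V y e)
          (fderiv ℝ (fun y => fderiv ℝ V y e) p) (p + (0 : ℝ) • e) := by
        simpa using h1.hasFDerivAt
      exact h2.comp_hasDerivAt 0 (hl 0)
    have hB : ∀ᶠ τ in 𝓝 (0 : ℝ),
        HasDerivAt (lineB C α q (y i) s d) (lineB1 C α q (y i) s d τ) τ := by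
      have h1 : ∀ᶠ τ in 𝓝 (0 : ℝ), 0 < q + 2 * y i * τ + τ ^ 2 :=
        (hasDerivAt_quad q (y i) 0).continuousAt.eventually (lt_mem_nhds (by simpa using hq0))
      have h2 : ∀ᶠ τ in 𝓝 (0 : ℝ), 0 < s + d * τ :=
        (hasDerivAt_lin s d 0).continuousAt.eventually (lt_mem_nhds (by simpa using hs0))
      filter_upwards [h1, h2] with τ h1 h2 using hasDerivAt_lineB _ _ _ _ _ _ _ h1 h2
    have hm : IsLocalMax (fun τ : ℝ => lineB C α q (y i) s d τ - V (p + τ • e)) 0 := by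
      have h := hl0.eventually hmax
      filter_upwards [h] with τ hτ
      have e0 := barrier_line k i C α p 0
      have eτ := barrier_line k i C α p τ
      rw [← hq, ← hs, ← hy, ← hd] at e0 eτ
      rw [← eτ, ← e0]
      simpa using hτ
    have := second_deriv_nonpos (hB.and hVd |>.mono fun τ h => h.1.sub h.2)
      ((hasDerivAt_lineB1 C α q (y i) s d hq0 hs0).sub hVdd) hm
    linarith
  have hsum := Finset.sum_le_sum fun i (_ : i ∈ Finset.univ) => hline i
  refine le_trans (le_of_eq ?_) hsum
  have hyk : y k = s := by simp [hy, hs]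
  have hyq : ∑ i, (y i) ^ 2 = q := by
    rw [hq, EuclideanSpace.norm_sq_eq]; simp
  have hqq : q ^ (α - 1) = q * q ^ (α - 2) := by
    rw [show α - 1 = 1 + (α - 2) by ring, Real.rpow_add hq0, Real.rpow_one]
  rw [← Finset.mul_sum]
  congr 1
  have hterm : ∀ i : Fin m,
      (2 * α * q ^ (α - 1) + 4 * (y i) ^ 2 * α * (α - 1) * q ^ (α - 2)) * (s - 2 + s⁻¹)
        + 4 * (y i) * α * q ^ (α - 1) * ((if k = i then 1 else 0) - (if k = i then 1 else 0) / s ^ 2)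
        + q ^ α * (2 * (if k = i then 1 else 0) ^ 2 / s ^ 3)
      = 2 * α * q ^ (α - 1) * (s - 2 + s⁻¹)
        + 4 * α * (α - 1) * q ^ (α - 2) * (s - 2 + s⁻¹) * (y i) ^ 2
        + (if k = i then 4 * α * s * q ^ (α - 1) * (1 - 1 / s ^ 2) + q ^ α * (2 / s ^ 3)
            else 0) := by
    intro i
    split_ifs with h
    · rw [← h, hyk]
      ring
    · ring
  rw [Finset.sum_congr rfl fun i _ => hterm i, Finset.sum_add_distrib, Finset.sum_add_distrib,
    Finset.sum_const, Finset.card_univ, Fintype.card_fin, nsmul_eq_mul, ← Finset.mul_sum, hyq,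
    Finset.sum_ite_eq, if_pos (Finset.mem_univ k), hqq]
  ring

lemma norm_add_single_sq {m : ℕ} (k : Fin m) (x : EuclideanSpace ℝ (Fin m)) :
    ‖x + EuclideanSpace.single k (1 : ℝ)‖ ^ 2 = ‖x‖ ^ 2 + 2 * x k + 1 := by
  simpa using norm_line x k 1

/-- The left-hand side is the right-hand side of the bound in `barrier_le_laplacian` for the
exponent `a > n`, so the barrier is a strict subsolution. -/
lemma barrier_strict (n : ℕ) (a q s : ℝ) (hna : (n : ℝ) < a) (hq : 1 ≤ q) (hs : 1 ≤ s) :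
    -((s - 1) * q ^ (-(n : ℝ) / 2 - 1)) < 1 / (4 * a) *
      ((2 * (-a / 2) * ((n + 4 : ℕ) : ℝ) * q ^ (-a / 2 - 1)
          + 4 * (-a / 2) * (-a / 2 - 1) * q ^ (-a / 2 - 1)) * (s - 2 + s⁻¹)
        + 4 * (-a / 2) * s * q ^ (-a / 2 - 1) * (1 - 1 / s ^ 2) + q ^ (-a / 2) * (2 / s ^ 3)) := by
  have ha : 0 < a := (Nat.cast_nonneg n).trans_lt hna
  have hs0 : 0 < s := by linarith
  have hX : q ^ (-a / 2 - 1) ≤ q ^ (-(n : ℝ) / 2 - 1) :=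
    Real.rpow_le_rpow_of_exponent_le hq (by linarith)
  have hX0 : 0 ≤ q ^ (-a / 2 - 1) := by positivity
  have hY : 0 < q ^ (-a / 2) := by positivity
  generalize q ^ (-a / 2 - 1) = X at *
  generalize q ^ (-a / 2) = Y at *
  generalize q ^ (-(n : ℝ) / 2 - 1) = Z at *
  have key : 1 / (4 * a) * ((2 * (-a / 2) * ((n + 4 : ℕ) : ℝ) * X
          + 4 * (-a / 2) * (-a / 2 - 1) * X) * (s - 2 + s⁻¹)
        + 4 * (-a / 2) * s * X * (1 - 1 / s ^ 2) + Y * (2 / s ^ 3))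
      = -((s - 1) * X) + (a - n) / 4 * X * ((s - 1) ^ 2 / s) + Y / (2 * a * s ^ 3) := by
    push_cast
    field_simp
    ring
  rw [key]
  have h1 : (s - 1) * X ≤ (s - 1) * Z := mul_le_mul_of_nonneg_left hX (by linarith)
  have h2 : 0 ≤ (a - n) / 4 * X * ((s - 1) ^ 2 / s) := by
    have : 0 ≤ (a - n) / 4 := by linarith
    positivity
  have h3 : 0 < Y / (2 * a * s ^ 3) := by positivity
  linarith

lemma sq_rpow_half {r : ℝ} (hr : 0 ≤ r) (b : ℝ) : (r ^ 2) ^ b = r ^ (2 * b) := by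
  rw [Real.rpow_mul hr]
  norm_num

lemma barrier_lt_of_large {m : ℕ} (k : Fin m) (a : ℝ) (ha : 1 < a) (ε : ℝ) (hε : 0 < ε) :
    ∃ R : ℝ, ∀ x : EuclideanSpace ℝ (Fin m), 0 ≤ x k → R ≤ ‖x‖ →
      barrier k (1 / (4 * a)) (-a / 2) x < ε := by
  obtain ⟨R, hR⟩ := eventually_atTop.1
    ((tendsto_rpow_neg_atTop (sub_pos.2 ha)).eventually (gt_mem_nhds hε))
  refine ⟨R, fun x hx hxR => ?_⟩
  have hsq := norm_add_single_sq k x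
  rw [barrier]
  have hsr : x k + 1 ≤ ‖x + EuclideanSpace.single k (1 : ℝ)‖ := by
    have := PiLp.norm_apply_le (x + EuclideanSpace.single k (1 : ℝ)) k
    refine le_trans ?_ this
    simpa using le_abs_self (x k + 1)
  have hxr : ‖x‖ ≤ ‖x + EuclideanSpace.single k (1 : ℝ)‖ := by
    refine (sq_le_sq₀ (norm_nonneg _) (norm_nonneg _)).1 ?_
    linarith
  have hr := hR _ (hxR.trans hxr)
  generalize ‖x + EuclideanSpace.single k (1 : ℝ)‖ = r at *
  have hr0 : 0 < r := by linarith
  have hC : 1 / (4 * a) ≤ 1 := by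
    rw [div_le_one (by linarith)]
    linarith
  have hinv : (x k + 1)⁻¹ ≤ 1 := inv_le_one_of_one_le₀ (by linarith)
  have hpow : (r ^ 2) ^ (-a / 2) * r = r ^ (-(a - 1)) := by
    rw [sq_rpow_half hr0.le, show -(a - 1) = 2 * (-a / 2) + 1 by ring, Real.rpow_add hr0,
      Real.rpow_one]
  have hP : 0 < (r ^ 2) ^ (-a / 2) := by positivity
  calc 1 / (4 * a) * ((r ^ 2) ^ (-a / 2) * (x k + 1 - 2 + (x k + 1)⁻¹))
      ≤ 1 / (4 * a) * ((r ^ 2) ^ (-a / 2) * r) := by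
        have : 0 < 1 / (4 * a) := by positivity
        gcongr
        linarith
    _ ≤ 1 * ((r ^ 2) ^ (-a / 2) * r) := by gcongr
    _ < ε := by rw [one_mul, hpow]; exact hr

lemma continuousOn_barrier {m : ℕ} (k : Fin m) (C α : ℝ) :
    ContinuousOn (barrier k C α) {x | 0 ≤ x k} := by
  unfold barrier
  refine continuousOn_const.mul (ContinuousOn.mul ?_ ?_)
  · refine ContinuousOn.rpow_const (by fun_prop) fun x hx => Or.inl ?_
    have hx' : 0 ≤ x k := hx
    rw [norm_add_single_sq]
    positivity
  · refine ContinuousOn.add (by fun_prop) (ContinuousOn.inv₀ (by fun_prop) fun x hx => ?_)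
    have hx' : 0 ≤ x k := hx
    positivity

/-- Lower bound for the solution `Ṽ` of `−ΔṼ = x_{n+4}|x+e_{n+4}|^{−n−2}` in `ℝ^{n+4}₊`
with zero boundary values and decay at infinity:
`Ṽ(x) ≥ (x_{n+4}²/(4n(1+x_{n+4}))) |x+e_{n+4}|^{−n} ≥ 0` on the closed half-space. -/
theorem V_lower_bound (n : ℕ) (hn : 1 ≤ n)
    (V : EuclideanSpace ℝ (Fin (n + 4)) → ℝ)
    (hVcont : ContinuousOn V {x : EuclideanSpace ℝ (Fin (n + 4)) | 0 ≤ x ⟨n + 3, by omega⟩})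
    (hVC2 : ContDiffOn ℝ 2 V {x : EuclideanSpace ℝ (Fin (n + 4)) | 0 < x ⟨n + 3, by omega⟩})
    (hpde : ∀ x : EuclideanSpace ℝ (Fin (n + 4)), 0 < x ⟨n + 3, by omega⟩ →
      -laplacian V x
        = x ⟨n + 3, by omega⟩
            * ‖x + EuclideanSpace.single (⟨n + 3, by omega⟩ : Fin (n + 4)) (1 : ℝ)‖
                ^ (-(n : ℝ) - 2))
    (hbdry : ∀ x : EuclideanSpace ℝ (Fin (n + 4)), x ⟨n + 3, by omega⟩ = 0 → V x = 0)
    (hdecay : ∀ ε > (0 : ℝ), ∃ R : ℝ, ∀ x : EuclideanSpace ℝ (Fin (n + 4)),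
      0 ≤ x ⟨n + 3, by omega⟩ → R ≤ ‖x‖ → |V x| < ε) :
    ∀ x : EuclideanSpace ℝ (Fin (n + 4)), 0 ≤ x ⟨n + 3, by omega⟩ →
      (x ⟨n + 3, by omega⟩) ^ 2 / (4 * (n : ℝ) * (1 + x ⟨n + 3, by omega⟩))
          * ‖x + EuclideanSpace.single (⟨n + 3, by omega⟩ : Fin (n + 4)) (1 : ℝ)‖
              ^ (-(n : ℝ)) ≤ V x
      ∧ 0 ≤ (x ⟨n + 3, by omega⟩) ^ 2 / (4 * (n : ℝ) * (1 + x ⟨n + 3, by omega⟩))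
          * ‖x + EuclideanSpace.single (⟨n + 3, by omega⟩ : Fin (n + 4)) (1 : ℝ)‖
              ^ (-(n : ℝ)) := by
  set k : Fin (n + 4) := ⟨n + 3, by omega⟩ with hk
  have hn1 : (1 : ℝ) ≤ n := by exact_mod_cast hn
  have hcomp : ∀ a : ℝ, (n : ℝ) < a → ∀ x : EuclideanSpace ℝ (Fin (n + 4)), 0 ≤ x k →
      barrier k (1 / (4 * a)) (-a / 2) x ≤ V x := by
    intro a ha x₀ hx₀
    by_contra! hlt
    obtain ⟨p, hpk, hp⟩ := exists_isLocalMax k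
      (fun x => barrier k (1 / (4 * a)) (-a / 2) x - V x)
      ((continuousOn_barrier k _ _).sub hVcont)
      (fun x hx => by norm_num [barrier, hbdry x hx, hx])
      (fun ε hε => by
        obtain ⟨R₁, h₁⟩ := barrier_lt_of_large k a (hn1.trans_lt ha) (ε / 2) (half_pos hε)
        obtain ⟨R₂, h₂⟩ := hdecay (ε / 2) (half_pos hε)
        refine ⟨max R₁ R₂, fun x hx hR => ?_⟩
        have e₁ := h₁ x hx ((le_max_left _ _).trans hR)
        have e₂ := (abs_lt.1 (h₂ x hx ((le_max_right _ _).trans hR))).1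
        linarith)
      x₀ hx₀ (sub_pos.2 hlt)
    have hop : IsOpen {x : EuclideanSpace ℝ (Fin (n + 4)) | 0 < x k} :=
      isOpen_lt continuous_const (by fun_prop)
    have hq1 : 1 ≤ ‖p + EuclideanSpace.single k (1 : ℝ)‖ ^ 2 := by
      rw [norm_add_single_sq]
      nlinarith [sq_nonneg ‖p‖]
    have hle := barrier_le_laplacian k (1 / (4 * a)) (-a / 2) V p
      (hVC2.contDiffAt (hop.mem_nhds hpk)) _ _ rfl (by linarith) rfl (by linarith) hp
    have hlt' := barrier_strict n a _ (p k + 1) ha hq1 (by linarith)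
    have hpde' := hpde p hpk
    rw [sq_rpow_half (norm_nonneg _) (-(n : ℝ) / 2 - 1),
      show 2 * (-(n : ℝ) / 2 - 1) = -(n : ℝ) - 2 by ring, add_sub_cancel_right, ← hpde'] at hlt'
    linarith
  intro x hx
  have hq0 : 0 < ‖x + EuclideanSpace.single k (1 : ℝ)‖ ^ 2 := by
    rw [norm_add_single_sq]
    positivity
  refine ⟨?_, by positivity⟩
  have hlim : Tendsto (fun a : ℝ => barrier k (1 / (4 * a)) (-a / 2) x) (𝓝[>] (n : ℝ))
      (𝓝 (barrier k (1 / (4 * (n : ℝ))) (-(n : ℝ) / 2) x)) := by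
    refine Tendsto.mono_left (ContinuousAt.tendsto ?_) nhdsWithin_le_nhds
    unfold barrier
    refine ContinuousAt.mul ?_ (ContinuousAt.mul ?_ continuousAt_const)
    · exact continuousAt_const.div (by fun_prop) (by positivity)
    · exact continuousAt_const.rpow (by fun_prop) (Or.inl hq0.ne')
  have h := le_of_tendsto hlim
    (eventually_nhdsWithin_of_forall fun a (ha : (n : ℝ) < a) => hcomp a ha x hx)
  refine le_trans (le_of_eq ?_) h
  rw [barrier, sq_rpow_half (norm_nonneg _), show 2 * (-(n : ℝ) / 2) = -(n : ℝ) by ring]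
  have h1 : 1 + x k ≠ 0 := by positivity
  have h2 : x k + 1 ≠ 0 := by positivity
  field_simp
  ring
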